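/- arXiv:1812.10955 — 2 statements merged into one kernel-verified Lean document; each statement's English description precedes it below -/
import Mathlib

section
/- Let q > 1 be a real number and let R, P be real numbers with 0 < P < R/2. Let k, p : ℕ → ℕ satisfy k(n)/n → R/2, p(n)/n → P, and p(n) ≤ k(n) for all sufficiently large n. Then (1/n)·log_q C(k(n), p(n)) converges to (R/2)·log_q(R/2) − P·log_q P − (R/2−P)·log_q(R/2−P) as n → ∞. -/
/-!
By Stirling's formula, if `m n / n → c > 0` then
`log (m n)! / n = (m n / n) * log n + c * log c - c + o(1)` (`tendsto_log_factorial_div`).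
Writing `C(k, p) = k! / (p! (k - p)!)` and applying this to `k`, `p` and `k - p`, the divergent
`log n` contributions cancel because `k = p + (k - p)`, and so do the linear terms `-c`. Dividing by
`log q` gives the claim in base `q`.
-/

open Filter Real

/-- The part of `log m!` beyond `m * log m - m` is logarithmic in `m`, hence `o(m)`. -/
lemma tendsto_stirling_error_div :
    Tendsto (fun m : ℕ => (Real.log (Nat.factorial m) - m * Real.log (m / Real.exp 1)) / m)
      atTop (nhds 0) := by
  have h1 : Tendsto (fun m : ℕ => Real.log (Stirling.stirlingSeq m) / m) atTop (nhds 0) :=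
    (Stirling.tendsto_stirlingSeq_sqrt_pi.log (by positivity)).div_atTop
      tendsto_natCast_atTop_atTop
  have h2 : Tendsto (fun m : ℕ => Real.log (m : ℝ) / m) atTop (nhds 0) :=
    Real.isLittleO_log_id_atTop.tendsto_div_nhds_zero.comp tendsto_natCast_atTop_atTop
  have h3 : Tendsto (fun m : ℕ => Real.log 2 / (m : ℝ)) atTop (nhds 0) :=
    tendsto_const_nhds.div_atTop tendsto_natCast_atTop_atTop
  have h := h1.add ((h3.add h2).const_mul (1 / 2))
  simp only [add_zero, mul_zero] at h
  refine h.congr' ?_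
  filter_upwards [eventually_gt_atTop 0] with m hm
  have hm' : (m : ℝ) ≠ 0 := by positivity
  rw [Stirling.log_stirlingSeq_formula, Real.log_mul two_ne_zero hm']
  ring

/-- Stirling's formula along a sequence `m n ~ c * n`, with the divergent `log n` term removed. -/
lemma tendsto_log_factorial_div {m : ℕ → ℕ} {c : ℝ} (hc : 0 < c)
    (hm : Tendsto (fun n => (m n : ℝ) / n) atTop (nhds c)) :
    Tendsto (fun n : ℕ => Real.log (Nat.factorial (m n)) / n - (m n : ℝ) / n * Real.log n)
      atTop (nhds (c * Real.log c - c)) := by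
  have hinf : Tendsto m atTop atTop := by
    rw [← tendsto_natCast_atTop_iff (R := ℝ)]
    refine (hm.pos_mul_atTop hc tendsto_natCast_atTop_atTop).congr' ?_
    filter_upwards [eventually_gt_atTop 0] with n hn
    have : (n : ℝ) ≠ 0 := by positivity
    field_simp
  have h := ((tendsto_stirling_error_div.comp hinf).mul hm).add
    ((hm.mul (hm.log hc.ne')).sub hm)
  simp only [zero_mul, zero_add] at h
  refine h.congr' ?_
  filter_upwards [eventually_gt_atTop 0, hinf.eventually_gt_atTop 0] with n hn hmn
  have hn' : (n : ℝ) ≠ 0 := by positivity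
  have hmn' : (m n : ℝ) ≠ 0 := by positivity
  simp only [Function.comp_apply]
  rw [Real.log_div hmn' (Real.exp_ne_zero 1), Real.log_div hmn' hn', Real.log_exp]
  field_simp
  ring

/-- If `k(n)/n → R/2` and `p(n)/n → P` with `0 < P < R/2`, then
`(1/n) log_q C(k(n), p(n)) → (R/2) log_q (R/2) − P log_q P − (R/2−P) log_q (R/2−P)`. -/
theorem binomial_k_p_asymptotic_exponent
    (q R P : ℝ) (hq : 1 < q) (hP : 0 < P) (hPR : P < R / 2)
    (k p : ℕ → ℕ)
    (hk : Tendsto (fun n => (k n : ℝ) / n) atTop (nhds (R / 2)))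
    (hp : Tendsto (fun n => (p n : ℝ) / n) atTop (nhds P))
    (hpk : ∀ᶠ n in atTop, p n ≤ k n) :
    Tendsto (fun n : ℕ => (1 / (n : ℝ)) * Real.logb q (Nat.choose (k n) (p n)))
      atTop (nhds ((R / 2) * Real.logb q (R / 2) - P * Real.logb q P
        - (R / 2 - P) * Real.logb q (R / 2 - P))) := by
  have hd : Tendsto (fun n => ((k n - p n : ℕ) : ℝ) / n) atTop (nhds (R / 2 - P)) := by
    refine (hk.sub hp).congr' ?_
    filter_upwards [hpk] with n hn
    rw [Nat.cast_sub hn]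
    ring
  have h := (((tendsto_log_factorial_div (hP.trans hPR) hk).sub
    (tendsto_log_factorial_div hP hp)).sub
    (tendsto_log_factorial_div (sub_pos.2 hPR) hd)).div_const (Real.log q)
  convert h.congr' ?_ using 2
  · simp only [Real.logb]
    ring
  · filter_upwards [hpk] with n hn
    rw [Nat.cast_choose ℝ hn, Real.logb, Real.log_div (by positivity) (by positivity),
      Real.log_mul (by positivity) (by positivity), Nat.cast_sub hn]
    ring
end

section
/- Let q ≥ 2 be an integer and let R, L, T, P, Q be real numbers with 0 < P < R/2, 0 < Q < L, 0 < T < 1, and 0 < T − 2P − 2Q < 1 − R − 2L. Let k1, k2, ℓ1, ℓ2, t, p1, p2, q1, q2 : ℕ → ℕ be as follows: k1(n)/n → R/2, k2(n)/n → R/2, ℓ1(n)/n → L, ℓ2(n)/n → L, t(n)/n → T, p1(n)/n → P, p2(n)/n → P, q1(n)/n → Q, q2(n)/n → Q, with all binomial coefficients below well-defined for all sufficiently large n. Let Cost(n) denote the sum C(k1(n),p1(n))·(q−1)^{p1(n)} + C(k2(n),p2(n))·(q−1)^{p2(n)} + C(k1(n),p1(n))·C(ℓ1(n),q1(n))·(q−1)^{p1(n)+q1(n)}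 + C(k2(n),p2(n))·C(ℓ2(n),q2(n))·(q−1)^{p2(n)+q2(n)} + C(k1(n),p1(n))·C(k2(n),p2(n))·C(ℓ1(n),q1(n))·C(ℓ2(n),q2(n))·(q−1)^{p1(n)+p2(n)+q1(n)+q2(n)}·q^{−ℓ1(n)−ℓ2(n)}, and let Succ(n) denote C(n,t(n))^{−1}·C(n−k1(n)−k2(n)−ℓ1(n)−ℓ2(n), t(n)−p1(n)−p2(n)−q1(n)−q2(n))·C(k1(n),p1(n))·C(k2(n),p2(n))·C(ℓ1(n),q1(n))·C(ℓ2(n),q2(n)). Then (1/n)·log_q( Cost(n)/Succ(n) ) converges to D(P,Q,L) := max{ log_q(q−1)·P − (R/2)·log_q(R/2) + P·log_q P + (R/2−P)·log_q(R/2−P) − 2L·log_q L + 2Q·log_q Q + 2(L−Q)·log_q(L−Q) ; log_q(q−1)·(P+Q) − (R/2)·log_q(R/2) + P·log_q P + (R/2−P)·log_q(R/2−P) − L·log_q L + Q·log_q Q + (L−Q)·log_q(L−Q) ; log_q(q−1)·(2P+2Q) − 2L } − T·log_q T − (1−T)·log_q(1−T) − (1−R−2L)·log_q(1−R−2L) +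 (T−2P−2Q)·log_q(T−2P−2Q) + (1−R−2L−T+2P+2Q)·log_q(1−R−2L−T+2P+2Q). -/
/-! The overall cost is a sum of products of binomial coefficients and powers, so its exponential
rate, `lim (1/n) log_q f(n)`, is obtained from three facts. Rates add under products
(`ExpRate.mul`, `ExpRate.inv`), the rate of a sum of positive sequences is the maximum of the rates
(`ExpRate.add`), since `max f g ≤ f + g ≤ 2 max f g`, and
`C(a, b)` has rate `A log_q A - B log_q B - (A - B) log_q (A - B)` when `a/n → A`, `b/n → B` and
`0 < B < A` (`ExpRate.choose`).

The last fact comes from Stirling's formula: `log a! = n ((a/n) log n + A log A - A + o(1))`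
(`tendsto_log_factorial`), and the terms in `log n` cancel in `a! / (b! (a - b)!)`.
The truncated subtractions in the success probability are harmless because the differences of the
limits are positive (`tendsto_natSub_div`). -/

open Filter Real

/-- `f` is eventually positive and grows like `b ^ (F n + o(n))`. -/
def ExpRate (b : ℝ) (f : ℕ → ℝ) (F : ℝ) : Prop :=
  (∀ᶠ n in atTop, 0 < f n) ∧
    Tendsto (fun n : ℕ => (1 / (n : ℝ)) * Real.logb b (f n)) atTop (nhds F)

lemma ExpRate.mul {b : ℝ} {f g : ℕ → ℝ} {F G : ℝ} (hf : ExpRate b f F) (hg : ExpRate b g G) :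
    ExpRate b (fun n => f n * g n) (F + G) := by
  refine ⟨by filter_upwards [hf.1, hg.1] with n h1 h2 using mul_pos h1 h2, ?_⟩
  refine (hf.2.add hg.2).congr' ?_
  filter_upwards [hf.1, hg.1] with n h1 h2
  rw [Real.logb_mul h1.ne' h2.ne', mul_add]

lemma ExpRate.inv {b : ℝ} {f : ℕ → ℝ} {F : ℝ} (hf : ExpRate b f F) :
    ExpRate b (fun n => (f n)⁻¹) (-F) := by
  refine ⟨by filter_upwards [hf.1] with n h1 using inv_pos.2 h1, ?_⟩
  refine hf.2.neg.congr fun n => ?_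
  rw [Real.logb_inv, mul_neg]

lemma ExpRate.add {b : ℝ} (hb : 1 < b) {f g : ℕ → ℝ} {F G : ℝ}
    (hf : ExpRate b f F) (hg : ExpRate b g G) :
    ExpRate b (fun n => f n + g n) (max F G) := by
  refine ⟨by filter_upwards [hf.1, hg.1] with n h1 h2 using add_pos h1 h2, ?_⟩
  have hlow := hf.2.max hg.2
  have hup : Tendsto (fun n : ℕ => (1 / (n : ℝ)) * Real.logb b 2 +
      max ((1 / (n : ℝ)) * Real.logb b (f n)) ((1 / (n : ℝ)) * Real.logb b (g n)))
      atTop (nhds (max F G)) := by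
    simpa using (tendsto_one_div_atTop_nhds_zero_nat.mul_const (Real.logb b 2)).add hlow
  refine tendsto_of_tendsto_of_tendsto_of_le_of_le' hlow hup ?_ ?_
  · filter_upwards [hf.1, hg.1] with n h1 h2
    have hn : (0 : ℝ) ≤ 1 / (n : ℝ) := by positivity
    refine max_le ?_ ?_
    · exact mul_le_mul_of_nonneg_left (Real.logb_le_logb_of_le hb h1 (by linarith)) hn
    · exact mul_le_mul_of_nonneg_left (Real.logb_le_logb_of_le hb h2 (by linarith)) hn
  · filter_upwards [hf.1, hg.1] with n h1 h2
    have hn : (0 : ℝ) ≤ 1 / (n : ℝ) := by positivity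
    rcases le_total (f n) (g n) with h | h
    · refine le_trans ?_ (add_le_add_right (le_max_right _ _) _)
      rw [← mul_add, ← Real.logb_mul two_ne_zero h2.ne']
      exact mul_le_mul_of_nonneg_left
        (Real.logb_le_logb_of_le hb (by linarith) (by linarith)) hn
    · refine le_trans ?_ (add_le_add_right (le_max_left _ _) _)
      rw [← mul_add, ← Real.logb_mul two_ne_zero h1.ne']
      exact mul_le_mul_of_nonneg_left
        (Real.logb_le_logb_of_le hb (by linarith) (by linarith)) hn

lemma ExpRate.pow {b c : ℝ} (hc : 0 < c) {m : ℕ → ℕ} {M : ℝ}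
    (hm : Tendsto (fun n => (m n : ℝ) / n) atTop (nhds M)) :
    ExpRate b (fun n => c ^ m n) (Real.logb b c * M) := by
  refine ⟨Eventually.of_forall fun n => pow_pos hc _, ?_⟩
  refine (hm.const_mul (Real.logb b c)).congr fun n => ?_
  rw [Real.logb_pow]
  ring

lemma tendsto_natAdd_div {a b : ℕ → ℕ} {A B : ℝ}
    (ha : Tendsto (fun n => (a n : ℝ) / n) atTop (nhds A))
    (hb : Tendsto (fun n => (b n : ℝ) / n) atTop (nhds B)) :
    Tendsto (fun n => ((a n + b n : ℕ) : ℝ) / n) atTop (nhds (A + B)) := by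
  refine (ha.add hb).congr fun n => ?_
  push_cast
  ring

/-- If the limiting densities satisfy `B < A`, truncation in `a n - b n` eventually plays no role. -/
lemma tendsto_natSub_div {a b : ℕ → ℕ} {A B : ℝ} (hAB : B < A)
    (ha : Tendsto (fun n => (a n : ℝ) / n) atTop (nhds A))
    (hb : Tendsto (fun n => (b n : ℝ) / n) atTop (nhds B)) :
    Tendsto (fun n => ((a n - b n : ℕ) : ℝ) / n) atTop (nhds (A - B)) := by
  refine (ha.sub hb).congr' ?_
  filter_upwards [hb.eventually_lt ha hAB, eventually_gt_atTop 0] with n h hn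
  have hn' : (0 : ℝ) < n := by exact_mod_cast hn
  have hle : b n ≤ a n := by exact_mod_cast ((div_lt_div_iff_of_pos_right hn').1 h).le
  rw [Nat.cast_sub hle]
  ring

/-- The leading part of Stirling's formula, normalised by `n` where `a n` is asymptotic to `A n`. -/
lemma tendsto_log_factorial {a : ℕ → ℕ} {A : ℝ} (hA : 0 < A)
    (ha : Tendsto (fun n => (a n : ℝ) / n) atTop (nhds A)) :
    Tendsto (fun n : ℕ => Real.log ((a n).factorial : ℝ) / n - (a n : ℝ) / n * Real.log n)
      atTop (nhds (A * Real.log A - A)) := by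
  have hcast : Tendsto (fun n => (a n : ℝ)) atTop atTop := by
    refine (ha.pos_mul_atTop hA tendsto_natCast_atTop_atTop).congr' ?_
    filter_upwards [eventually_gt_atTop 0] with n hn
    have hn' : (n : ℝ) ≠ 0 := by exact_mod_cast hn.ne'
    field_simp
  have hnat : Tendsto a atTop atTop := tendsto_natCast_atTop_iff.1 hcast
  have hstir : Tendsto (fun n => Real.log (Stirling.stirlingSeq (a n)) * (1 / (n : ℝ))) atTop
      (nhds 0) := by
    have h := (Stirling.tendsto_stirlingSeq_sqrt_pi.comp hnat).log
      (Real.sqrt_pos.2 Real.pi_pos).ne'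
    simpa using h.mul tendsto_one_div_atTop_nhds_zero_nat
  have hlog : Tendsto (fun n => Real.log (2 * a n) * (1 / (n : ℝ))) atTop (nhds 0) := by
    have hdiv : Tendsto (fun x : ℝ => Real.log x / x) atTop (nhds 0) :=
      Real.isLittleO_log_id_atTop.tendsto_div_nhds_zero
    have h := (hdiv.comp (hcast.const_mul_atTop two_pos)).mul (ha.const_mul 2)
    simp only [zero_mul] at h
    refine h.congr' ?_
    filter_upwards [hcast.eventually_gt_atTop 0] with n hn
    simp only [Function.comp_apply]
    field_simp
  have hmain : Tendsto (fun n => (a n : ℝ) / n * (Real.log ((a n : ℝ) / n) - 1)) atTop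
      (nhds (A * (Real.log A - 1))) :=
    ha.mul ((ha.log hA.ne').sub_const 1)
  have hsum := (hstir.add (hlog.const_mul (1 / 2))).add hmain
  rw [show A * Real.log A - A = 0 + 1 / 2 * 0 + A * (Real.log A - 1) by ring]
  refine hsum.congr' ?_
  filter_upwards [hcast.eventually_gt_atTop 0, eventually_gt_atTop 0] with n h hn
  have hn' : (n : ℝ) ≠ 0 := by exact_mod_cast hn.ne'
  rw [Stirling.log_stirlingSeq_formula, Real.log_div h.ne' hn',
    Real.log_div h.ne' (Real.exp_pos 1).ne', Real.log_exp]
  ring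

/-- The binary entropy rate of binomial coefficients. -/
lemma ExpRate.choose {c : ℝ} {a b : ℕ → ℕ} {A B : ℝ} (hB : 0 < B) (hAB : B < A)
    (ha : Tendsto (fun n => (a n : ℝ) / n) atTop (nhds A))
    (hb : Tendsto (fun n => (b n : ℝ) / n) atTop (nhds B)) :
    ExpRate c (fun n => (Nat.choose (a n) (b n) : ℝ))
      (A * Real.logb c A - B * Real.logb c B - (A - B) * Real.logb c (A - B)) := by
  have hle : ∀ᶠ n in atTop, b n ≤ a n := by
    filter_upwards [hb.eventually_lt ha hAB, eventually_gt_atTop 0] with n h hn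
    have hn' : (0 : ℝ) < n := by exact_mod_cast hn
    exact_mod_cast ((div_lt_div_iff_of_pos_right hn').1 h).le
  refine ⟨by filter_upwards [hle] with n h using by exact_mod_cast Nat.choose_pos h, ?_⟩
  have h1 := tendsto_log_factorial (hB.trans hAB) ha
  have h2 := tendsto_log_factorial hB hb
  have h3 := tendsto_log_factorial (sub_pos.2 hAB) (tendsto_natSub_div hAB ha hb)
  have h := ((h1.sub h2).sub h3).div_const (Real.log c)
  have hval : A * Real.logb c A - B * Real.logb c B - (A - B) * Real.logb c (A - B) =
      (A * Real.log A - A - (B * Real.log B - B) - ((A - B) * Real.log (A - B) - (A - B))) /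
        Real.log c := by
    simp only [Real.logb]
    ring
  rw [hval]
  refine h.congr' ?_
  filter_upwards [hle] with n hn
  have hx : ((a n).factorial : ℝ) ≠ 0 := by positivity
  have hy : ((b n).factorial : ℝ) ≠ 0 := by positivity
  have hz : ((a n - b n).factorial : ℝ) ≠ 0 := by positivity
  rw [Nat.cast_choose ℝ hn, Real.logb, Real.log_div hx (mul_ne_zero hy hz), Real.log_mul hy hz,
    Nat.cast_sub hn]
  ring

/-- The asymptotic exponent `D(P,Q,L)` of the overall cost
`Cost(n)/Succ(n)` of the ball-collision algorithm over `F_q`. -/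
theorem ball_collision_overall_cost_exponent
    (q : ℕ) (hq : 2 ≤ q)
    (R L T P Q : ℝ)
    (hP0 : 0 < P) (hPR : P < R / 2)
    (hQ0 : 0 < Q) (hQL : Q < L)
    (hT0 : 0 < T) (hT1 : T < 1)
    (h0 : 0 < T - 2 * P - 2 * Q) (h1 : T - 2 * P - 2 * Q < 1 - R - 2 * L)
    (k1 k2 l1 l2 t p1 p2 q1 q2 : ℕ → ℕ)
    (hk1 : Tendsto (fun n => (k1 n : ℝ) / n) atTop (nhds (R / 2)))
    (hk2 : Tendsto (fun n => (k2 n : ℝ) / n) atTop (nhds (R / 2)))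
    (hl1 : Tendsto (fun n => (l1 n : ℝ) / n) atTop (nhds L))
    (hl2 : Tendsto (fun n => (l2 n : ℝ) / n) atTop (nhds L))
    (ht : Tendsto (fun n => (t n : ℝ) / n) atTop (nhds T))
    (hp1 : Tendsto (fun n => (p1 n : ℝ) / n) atTop (nhds P))
    (hp2 : Tendsto (fun n => (p2 n : ℝ) / n) atTop (nhds P))
    (hq1 : Tendsto (fun n => (q1 n : ℝ) / n) atTop (nhds Q))
    (hq2 : Tendsto (fun n => (q2 n : ℝ) / n) atTop (nhds Q))
    (hwd : ∀ᶠ n in atTop,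
      p1 n ≤ k1 n ∧ p2 n ≤ k2 n ∧ q1 n ≤ l1 n ∧ q2 n ≤ l2 n ∧ t n ≤ n
      ∧ t n - p1 n - p2 n - q1 n - q2 n ≤ n - k1 n - k2 n - l1 n - l2 n) :
    -- cost of one iteration
    let Cost : ℕ → ℝ := fun n =>
      (Nat.choose (k1 n) (p1 n) : ℝ) * ((q : ℝ) - 1) ^ p1 n
        + (Nat.choose (k2 n) (p2 n) : ℝ) * ((q : ℝ) - 1) ^ p2 n
        + (Nat.choose (k1 n) (p1 n) : ℝ) * (Nat.choose (l1 n) (q1 n) : ℝ)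
          * ((q : ℝ) - 1) ^ (p1 n + q1 n)
        + (Nat.choose (k2 n) (p2 n) : ℝ) * (Nat.choose (l2 n) (q2 n) : ℝ)
          * ((q : ℝ) - 1) ^ (p2 n + q2 n)
        + (Nat.choose (k1 n) (p1 n) : ℝ) * (Nat.choose (k2 n) (p2 n) : ℝ)
          * (Nat.choose (l1 n) (q1 n) : ℝ) * (Nat.choose (l2 n) (q2 n) : ℝ)
          * ((q : ℝ) - 1) ^ (p1 n + p2 n + q1 n + q2 n)
          * ((q : ℝ) ^ (l1 n + l2 n))⁻¹
    -- success probability of one iteration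
    let Succ : ℕ → ℝ := fun n =>
      ((Nat.choose n (t n) : ℝ))⁻¹
        * (Nat.choose (n - k1 n - k2 n - l1 n - l2 n)
            (t n - p1 n - p2 n - q1 n - q2 n) : ℝ)
        * (Nat.choose (k1 n) (p1 n) : ℝ) * (Nat.choose (k2 n) (p2 n) : ℝ)
        * (Nat.choose (l1 n) (q1 n) : ℝ) * (Nat.choose (l2 n) (q2 n) : ℝ)
    Tendsto (fun n : ℕ => (1 / (n : ℝ)) * Real.logb q (Cost n / Succ n))
      atTop
      (nhds (max
          (Real.logb q ((q : ℝ) - 1) * P - (R / 2) * Real.logb q (R / 2)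
            + P * Real.logb q P + (R / 2 - P) * Real.logb q (R / 2 - P)
            - 2 * L * Real.logb q L + 2 * Q * Real.logb q Q
            + 2 * (L - Q) * Real.logb q (L - Q))
          (max
            (Real.logb q ((q : ℝ) - 1) * (P + Q) - (R / 2) * Real.logb q (R / 2)
              + P * Real.logb q P + (R / 2 - P) * Real.logb q (R / 2 - P)
              - L * Real.logb q L + Q * Real.logb q Q
              + (L - Q) * Real.logb q (L - Q))
            (Real.logb q ((q : ℝ) - 1) * (2 * P + 2 * Q) - 2 * L))
        - T * Real.logb q T - (1 - T) * Real.logb q (1 - T)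
        - (1 - R - 2 * L) * Real.logb q (1 - R - 2 * L)
        + (T - 2 * P - 2 * Q) * Real.logb q (T - 2 * P - 2 * Q)
        + (1 - R - 2 * L - T + 2 * P + 2 * Q)
          * Real.logb q (1 - R - 2 * L - T + 2 * P + 2 * Q))) := by
  intro Cost Succ
  have hq2' : (2 : ℝ) ≤ q := by exact_mod_cast hq
  have hb : (1 : ℝ) < q := by linarith
  have hc : (0 : ℝ) < (q : ℝ) - 1 := by linarith
  have hn1 : Tendsto (fun n : ℕ => ((n : ℕ) : ℝ) / n) atTop (nhds 1) := by
    refine tendsto_const_nhds.congr' ?_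
    filter_upwards [eventually_gt_atTop 0] with n hn
    have hn' : (n : ℝ) ≠ 0 := by exact_mod_cast hn.ne'
    exact (div_self hn').symm
  have htop := tendsto_natSub_div (by linarith) (tendsto_natSub_div (by linarith)
    (tendsto_natSub_div (by linarith) (tendsto_natSub_div (by linarith) hn1 hk1) hk2) hl1) hl2
  have hbot := tendsto_natSub_div (by linarith) (tendsto_natSub_div (by linarith)
    (tendsto_natSub_div (by linarith) (tendsto_natSub_div (by linarith) ht hp1) hp2) hq1) hq2
  rw [show 1 - R / 2 - R / 2 - L - L = 1 - R - 2 * L by ring] at htop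
  rw [show T - P - P - Q - Q = T - 2 * P - 2 * Q by ring] at hbot
  have cK1 := ExpRate.choose (c := q) hP0 hPR hk1 hp1
  have cK2 := ExpRate.choose (c := q) hP0 hPR hk2 hp2
  have cL1 := ExpRate.choose (c := q) hQ0 hQL hl1 hq1
  have cL2 := ExpRate.choose (c := q) hQ0 hQL hl2 hq2
  have cN := ExpRate.choose (c := q) hT0 hT1 hn1 ht
  have cM := ExpRate.choose (c := q) h0 h1 htop hbot
  have e1 := cK1.mul (ExpRate.pow (b := q) hc hp1)
  have e2 := cK2.mul (ExpRate.pow (b := q) hc hp2)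
  have e3 := (cK1.mul cL1).mul (ExpRate.pow (b := q) hc (tendsto_natAdd_div hp1 hq1))
  have e4 := (cK2.mul cL2).mul (ExpRate.pow (b := q) hc (tendsto_natAdd_div hp2 hq2))
  have e5 := ((((cK1.mul cK2).mul cL1).mul cL2).mul (ExpRate.pow (b := q) hc
    (tendsto_natAdd_div (tendsto_natAdd_div (tendsto_natAdd_div hp1 hp2) hq1) hq2))).mul
    (ExpRate.pow (b := q) (by linarith : (0 : ℝ) < q) (tendsto_natAdd_div hl1 hl2)).inv
  have hCost : ExpRate q Cost _ := (((e1.add hb e2).add hb e3).add hb e4).add hb e5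
  have hSucc : ExpRate q Succ _ := ((((cN.inv.mul cM).mul cK1).mul cK2).mul cL1).mul cL2
  have hlim := (hCost.mul hSucc.inv).2
  simp only [← div_eq_mul_inv] at hlim
  convert hlim using 2
  -- Every term of the cost exceeds the matching entry of the stated maximum by the rate
  -- `2 h_K + 2 h_L` of the four binomial coefficients in the success probability.
  have key : ∀ {X Y Z A B C c : ℝ}, A = X + c → B = Y + c → C = Z + c →
      max A (max B C) = max X (max Y Z) + c := by
    rintro X Y Z A B C c rfl rfl rfl
    rw [max_add_add_right, max_add_add_right]
  simp only [max_self, max_assoc, Real.logb_self_eq_one hb, Real.logb_one]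
  rw [show 1 - R - 2 * L - (T - 2 * P - 2 * Q) = 1 - R - 2 * L - T + 2 * P + 2 * Q by ring]
  conv_rhs => rw [key (c := 2 * (R / 2 * Real.logb q (R / 2) - P * Real.logb q P
        - (R / 2 - P) * Real.logb q (R / 2 - P))
      + 2 * (L * Real.logb q L - Q * Real.logb q Q - (L - Q) * Real.logb q (L - Q)))
      (X := Real.logb q ((q : ℝ) - 1) * P - (R / 2) * Real.logb q (R / 2)
            + P * Real.logb q P + (R / 2 - P) * Real.logb q (R / 2 - P)
            - 2 * L * Real.logb q L + 2 * Q * Real.logb q Q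
            + 2 * (L - Q) * Real.logb q (L - Q))
      (Y := Real.logb q ((q : ℝ) - 1) * (P + Q) - (R / 2) * Real.logb q (R / 2)
              + P * Real.logb q P + (R / 2 - P) * Real.logb q (R / 2 - P)
              - L * Real.logb q L + Q * Real.logb q Q
              + (L - Q) * Real.logb q (L - Q))
      (Z := Real.logb q ((q : ℝ) - 1) * (2 * P + 2 * Q) - 2 * L) (by ring) (by ring) (by ring)]
  ring
end
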